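/- arXiv:0810.3864 — 5 statements merged into one kernel-verified Lean document; each statement's English description precedes it below -/
import Mathlib

section
/- Let K be an algebraically closed field, let G be an n×n matrix over K, and suppose the characteristic polynomial of G factors as ∏_{i=1}^{m} (X − λ_i)^{p_i} where λ_1, …, λ_m ∈ K are pairwise distinct and p_1, …, p_m ≥ 1. If t > m, then det M_{t,l}(G) = 0 for every integer l ≥ 0. -/
open Polynomial Matrix

/-!
Put `f = ∏ i, (X - λ i)`, a monic polynomial of degree `m < t`. Some power of `f` is a multiple of
the characteristic polynomial, so by Cayley–Hamilton `f(G)` is nilpotent, hence every `G ^ k f(G)`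
is nilpotent and traceless. Written out in the coefficients of `f`, these trace identities say that
the coefficient vector of `f`, which has an entry equal to `1`, lies in the kernel of `M_{t,l}(G)`.
-/

theorem prod_pow_dvd_prod_pow_sum {M κ : Type*} [CommMonoid M] (s : Finset κ) (f : κ → M)
    (p : κ → ℕ) : ∏ i ∈ s, f i ^ p i ∣ (∏ i ∈ s, f i) ^ ∑ i ∈ s, p i := by
  rw [← Finset.prod_pow]
  exact Finset.prod_dvd_prod_of_dvd _ _ fun _ hi =>
    pow_dvd_pow _ (Finset.single_le_sum_of_canonicallyOrdered hi)

section

variable {R ι : Type*} [CommRing R] [Fintype ι] [DecidableEq ι]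

theorem det_smul_eq_zero_of_mulVec_eq_zero {A : Matrix ι ι R} {v : ι → R} (hv : A *ᵥ v = 0) :
    A.det • v = 0 :=
  calc
    A.det • v = (A.adjugate * A) *ᵥ v := by rw [adjugate_mul, smul_mulVec, one_mulVec]
    _ = 0 := by rw [← mulVec_mulVec, hv, mulVec_zero]

theorem isNilpotent_aeval_of_charpoly_dvd_pow {G : Matrix ι ι R} {f : R[X]} {N : ℕ}
    (hf : G.charpoly ∣ f ^ N) : IsNilpotent (aeval G f) := by
  obtain ⟨q, hq⟩ := hf
  exact ⟨N, by rw [← map_pow, hq, map_mul, aeval_self_charpoly, zero_mul]⟩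

theorem trace_aeval_mul_eq_zero_of_isNilpotent [IsReduced R] {G : Matrix ι ι R} {f : R[X]}
    (hf : IsNilpotent (aeval G f)) (g : R[X]) : (aeval G (g * f)).trace = 0 := by
  have hgf : IsNilpotent (aeval G (g * f)) := by
    rw [map_mul]
    exact ((Commute.all g f).map (aeval G)).isNilpotent_mul_left hf
  exact (isNilpotent_trace_of_isNilpotent hgf).eq_zero

/-- The matrix `M_{t,l}(G)` of traces of powers of `G`, with indices starting at `0`, which shifts
the exponent `i + j + l - 2` of the `1`-based convention to `i + j + l`. -/
def powTraceMatrix (G : Matrix ι ι R) (t l : ℕ) : Matrix (Fin t) (Fin t) R :=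
  Matrix.of fun i j => (G ^ (i.1 + j.1 + l)).trace

theorem powTraceMatrix_mulVec_coeff (G : Matrix ι ι R) {t : ℕ} (l : ℕ) {f : R[X]}
    (hf : f.natDegree < t) (i : Fin t) :
    (powTraceMatrix G t l *ᵥ fun j => f.coeff j) i = (aeval G (X ^ (i.1 + l) * f)).trace := by
  have hterm (j : ℕ) : (G ^ (i.1 + j + l)).trace * f.coeff j =
      (G ^ (i.1 + l) * f.coeff j • G ^ j).trace := by
    rw [mul_smul_comm, trace_smul, ← pow_add, smul_eq_mul, mul_comm, add_right_comm]
  calc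
    _ = ∑ j : Fin t, (G ^ (i.1 + j.1 + l)).trace * f.coeff j := rfl
    _ = ∑ j : Fin t, (G ^ (i.1 + l) * f.coeff j • G ^ j.1).trace :=
      Finset.sum_congr rfl fun j _ => hterm j
    _ = (aeval G (X ^ (i.1 + l) * f)).trace := by
      rw [map_mul, map_pow, aeval_X, aeval_eq_sum_range' hf, Finset.mul_sum, trace_sum,
        Finset.sum_range]

theorem det_powTraceMatrix_eq_zero_of_isNilpotent_aeval [IsReduced R] {G : Matrix ι ι R}
    {f : R[X]} (hmonic : f.Monic) (hnil : IsNilpotent (aeval G f)) {t : ℕ} (l : ℕ)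
    (ht : f.natDegree < t) : (powTraceMatrix G t l).det = 0 := by
  have hker : (powTraceMatrix G t l *ᵥ fun j => f.coeff j) = 0 := funext fun i =>
    (powTraceMatrix_mulVec_coeff G l ht i).trans (trace_aeval_mul_eq_zero_of_isNilpotent hnil _)
  have hlead := congrFun (det_smul_eq_zero_of_mulVec_eq_zero hker) ⟨f.natDegree, ht⟩
  simpa only [Pi.smul_apply, Pi.zero_apply, hmonic.coeff_natDegree, smul_eq_mul, mul_one]
    using hlead

theorem det_M_eq_zero_of_lt_general [IsReduced R] {κ : Type*} [Fintype κ] (G : Matrix ι ι R)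
    (lam : κ → R) (p : κ → ℕ) (hchar : G.charpoly = ∏ i, (X - C (lam i)) ^ p i)
    (t l : ℕ) (ht : Fintype.card κ < t) : (powTraceMatrix G t l).det = 0 := by
  have hmonic : (∏ i, (X - C (lam i))).Monic :=
    monic_prod_of_monic _ _ fun i _ => monic_X_sub_C (lam i)
  have hdeg : (∏ i, (X - C (lam i))).natDegree ≤ Fintype.card κ := by
    nontriviality R
    exact (natDegree_finsetProd_X_sub_C_eq_card Finset.univ lam).le
  have hnil : IsNilpotent (aeval G (∏ i, (X - C (lam i)))) :=
    isNilpotent_aeval_of_charpoly_dvd_pow (hchar ▸ prod_pow_dvd_prod_pow_sum _ _ p)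
  exact det_powTraceMatrix_eq_zero_of_isNilpotent_aeval hmonic hnil l (hdeg.trans_lt ht)

end

/-- If `G` has `m` distinct eigenvalues (the characteristic polynomial
factors as `∏ (X - λᵢ)^{pᵢ}` with the `λᵢ` pairwise distinct and `pᵢ ≥ 1`), then for
`t > m` the determinant of the `t × t` matrix `M_{t,l}(G)` — whose `(i,j)` entry
(`1`-based) is `tr G^{i+j+l-2}`, i.e. `tr G^{i+j+l}` with `0`-based indices — vanishes. -/
theorem det_M_eq_zero_of_lt {K : Type*} [Field K] [IsAlgClosed K] {n m : ℕ}
    (G : Matrix (Fin n) (Fin n) K) (lam : Fin m → K) (p : Fin m → ℕ)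
    (hinj : Function.Injective lam) (hp : ∀ i, 1 ≤ p i)
    (hchar : G.charpoly = ∏ i, (X - C (lam i)) ^ p i)
    (t l : ℕ) (ht : m < t) :
    (Matrix.of fun i j : Fin t => (G ^ (i.1 + j.1 + l)).trace).det = 0 :=
  det_M_eq_zero_of_lt_general G lam p hchar t l ((Fintype.card_fin m).trans_lt ht)
end

section
/- Let K be an algebraically closed field, let G be an n×n matrix over K, and suppose the characteristic polynomial of G factors as ∏_{i=1}^{m} (X − λ_i)^{p_i} where λ_1, …, λ_m ∈ K are pairwise distinct and p_1, …, p_m ≥ 1. Then for every 1 ≤ t ≤ m and every integer l ≥ 0, det M_{t,l}(G) = Σ_T p_{i_1}⋯p_{i_t} · (λ_{i_1}⋯λ_{i_t})^l · (det V(λ_{i_1}, …, λ_{i_t}))², where the sum runs over all t-element subsets T = {i_1 < ⋯ < i_t} of {1, …, m}. -/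
open Polynomial Matrix

/-!
The determinant of `q(G)` is the resultant of `charpoly G` and `q`: both sides commute with ring
homomorphisms, which reduces the claim to a field over which `q` splits, and both are
multiplicative in `q`. Over `R[X]`, the polynomial `X - q(Y)` in `Y` then yields the characteristic
polynomial of `q(G)`, hence `tr G ^ k = ∑ pᵢ λᵢ ^ k`. Therefore `M_{t,l}(G) = Vᵀ D V`, where `V` is
the rectangular Vandermonde matrix of the `λᵢ` and `D` is diagonal with entries `pᵢ λᵢ ^ l`, and
the Cauchy–Binet formula expands its determinant.
-/

section Resultant

variable {R S ι : Type*} [CommRing R] [CommRing S] [Fintype ι] [DecidableEq ι]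

theorem aeval_matrix_map (φ : R →+* S) (G : Matrix ι ι R) (q : R[X]) :
    aeval (G.map φ) (q.map φ) = (aeval G q).map φ := by
  rw [← φ.mapMatrix_apply, ← φ.mapMatrix_apply]
  refine (map_aeval_eq_aeval_map ?_ q G).symm
  ext r i j
  simp [algebraMap_matrix_apply, apply_ite φ]

theorem det_aeval_X_add_C (G : Matrix ι ι R) (a : R) :
    (aeval G (X + C a)).det = G.charpoly.resultant (X + C a) (Fintype.card ι) 1 := by
  nontriviality R
  have hneg : aeval G (X + C a) = -(scalar ι (-a) - G) := by
    simp [algebraMap_eq_diagonal, Pi.algebraMap_def, sub_eq_add_neg]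
  rw [resultant_X_add_C_right _ _ _ G.charpoly_natDegree_eq_dim.le, eval_charpoly, hneg, det_neg]

theorem det_aeval_eq_resultant_of_splits [IsDomain R] (G : Matrix ι ι R) {q : R[X]}
    (hq : q.Splits) :
    (aeval G q).det = G.charpoly.resultant q (Fintype.card ι) q.natDegree := by
  induction hq using Submonoid.closure_induction with
  | mem q hq =>
    obtain ⟨a, rfl⟩ | ⟨a, rfl⟩ := hq
    · simp [algebraMap_eq_diagonal, Pi.algebraMap_def]
    · rw [natDegree_X_add_C, det_aeval_X_add_C]
  | one => simp
  | mul q r _ _ hq hr =>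
    obtain rfl | hq0 := eq_or_ne q 0
    · simpa using hq
    obtain rfl | hr0 := eq_or_ne r 0
    · simpa using hr
    rw [map_mul, det_mul, hq, hr, natDegree_mul hq0 hr0,
      resultant_mul_right _ _ _ _ G.charpoly_natDegree_eq_dim.le]

theorem det_aeval_eq_resultant (G : Matrix ι ι R) (q : R[X]) :
    (aeval G q).det = G.charpoly.resultant q (Fintype.card ι) q.natDegree := by
  induction q using induction_of_Splits_of_injective_of_surjective with
  | Splits R q hq => exact det_aeval_eq_resultant_of_splits G hq
  | injective R S φ hφ q ih =>
    apply hφ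
    rw [RingHom.map_det, φ.mapMatrix_apply, ← aeval_matrix_map, ih (G.map φ), charpoly_map,
      natDegree_map_eq_of_injective hφ, resultant_map_map]
  | surjective R S φ hφ q ih =>
    obtain ⟨q, hq, hdeg⟩ := exists_degree_eq_of_mem_lifts (Polynomial.map_surjective φ hφ q)
    obtain ⟨G, rfl⟩ : ∃ G' : Matrix ι ι R, G'.map φ = G :=
      ⟨G.map (Function.surjInv hφ), by ext; simp [Function.surjInv_eq]⟩
    rw [← natDegree_eq_natDegree hdeg, ← hq, aeval_matrix_map, ← φ.mapMatrix_apply,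
      ← RingHom.map_det, ih q G, charpoly_map, resultant_map_map]

end Resultant

section Charpoly

variable {R ι κ : Type*} [CommRing R] [Fintype ι] [DecidableEq ι] [Fintype κ]

theorem natDegree_prod_X_sub_C_pow [Nontrivial R] (a : κ → R) (p : κ → ℕ) :
    (∏ i, (X - C (a i)) ^ p i).natDegree = ∑ i, p i := by
  simp [natDegree_prod_of_monic _ _ fun i _ => (monic_X_sub_C (a i)).pow (p i),
    (monic_X_sub_C _).natDegree_pow]

theorem resultant_prod_X_sub_C_pow (a : κ → R) (p : κ → ℕ) (q : R[X]) :
    (∏ i, (X - C (a i)) ^ p i).resultant q (∑ i, p i) q.natDegree =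
      ∏ i, q.eval (a i) ^ p i := by
  nontriviality R
  have hlead : ∏ i, ((X - C (a i)) ^ p i).leadingCoeff ≠ 0 := by
    simp [((monic_X_sub_C _).pow _).leadingCoeff]
  rw [← natDegree_prod_X_sub_C_pow a, resultant_prod_left _ _ _ _ hlead le_rfl]
  simp

variable {G : Matrix ι ι R} {a : κ → R} {p : κ → ℕ}

theorem det_aeval_of_charpoly_eq_prod (hG : G.charpoly = ∏ i, (X - C (a i)) ^ p i) (q : R[X]) :
    (aeval G q).det = ∏ i, q.eval (a i) ^ p i := by
  nontriviality R
  have hcard : Fintype.card ι = ∑ i, p i := by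
    rw [← G.charpoly_natDegree_eq_dim, hG, natDegree_prod_X_sub_C_pow]
  rw [det_aeval_eq_resultant, hG, hcard, resultant_prod_X_sub_C_pow]

theorem charpoly_aeval_of_charpoly_eq_prod (hG : G.charpoly = ∏ i, (X - C (a i)) ^ p i)
    (q : R[X]) : (aeval G q).charpoly = ∏ i, (X - C (q.eval (a i))) ^ p i := by
  have hGC : (G.map C).charpoly = ∏ i, (X - C (C (a i))) ^ p i := by
    rw [charpoly_map, hG]
    simp [Polynomial.map_prod]
  have hq : charmatrix (aeval G q) = aeval (G.map C) (C X - q.map C) := by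
    rw [map_sub, aeval_matrix_map, aeval_C]
    rfl
  rw [charpoly, hq, det_aeval_of_charpoly_eq_prod hGC]
  simp

theorem trace_aeval_of_charpoly_eq_prod (hG : G.charpoly = ∏ i, (X - C (a i)) ^ p i)
    (q : R[X]) : (aeval G q).trace = ∑ i, p i * q.eval (a i) := by
  rw [trace_eq_neg_charpoly_nextCoeff, charpoly_aeval_of_charpoly_eq_prod hG,
    Monic.nextCoeff_prod _ _ fun i _ => (monic_X_sub_C _).pow _]
  simp [(monic_X_sub_C _).nextCoeff_pow]

end Charpoly

section CauchyBinet

variable {R κ : Type*} [CommRing R] [Fintype κ]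

-- The left side is the coefficient of `X ^ card ι` in `det (1 + X A B) = det (1 + X B A)`.
theorem det_mul_eq_sum_principal_minors {ι : Type*} [Fintype ι] [DecidableEq ι] [DecidableEq κ]
    (A : Matrix ι κ R) (B : Matrix κ ι R) :
    (A * B).det = ∑ s ∈ Finset.univ.powersetCard (Fintype.card ι),
      ((B * A).submatrix (Subtype.val : s → κ) (Subtype.val : s → κ)).det := by
  have hcomm : det (1 + (X : R[X]) • (A * B).map C) = det (1 + (X : R[X]) • (B * A).map C) := by
    rw [Matrix.map_mul, Matrix.map_mul, ← Matrix.smul_mul, det_one_add_mul_comm, Matrix.mul_smul]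
  rw [← coeff_det_one_add_X_smul_eq_sum_minors, ← hcomm, coeff_det_one_add_X_smul_eq_sum_minors,
    ← Finset.card_univ, Finset.powersetCard_self, Finset.sum_singleton]
  exact (det_submatrix_equiv_self (Equiv.subtypeUnivEquiv Finset.mem_univ) (A * B)).symm

variable [LinearOrder κ] {t : ℕ}

theorem det_mul_eq_sum_det_submatrix_mul_det_submatrix
    (A : Matrix (Fin t) κ R) (B : Matrix κ (Fin t) R) :
    (A * B).det = ∑ T ∈ (Finset.univ.powersetCard t).attach,
      (A.submatrix id (T.1.orderEmbOfFin (Finset.mem_powersetCard.mp T.2).2)).det *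
        (B.submatrix (T.1.orderEmbOfFin (Finset.mem_powersetCard.mp T.2).2) id).det := by
  rw [det_mul_eq_sum_principal_minors, Fintype.card_fin, ← Finset.sum_attach]
  refine Finset.sum_congr rfl fun T _ => ?_
  rw [← det_submatrix_equiv_self (T.1.orderIsoOfFin (Finset.mem_powersetCard.mp T.2).2).toEquiv,
    mul_comm, ← det_mul, submatrix_submatrix]
  rfl

theorem det_of_sum_mul_pow_add (w a : κ → R) :
    (Matrix.of fun i j : Fin t => ∑ r, w r * a r ^ (i.1 + j.1)).det =
      ∑ T ∈ (Finset.univ.powersetCard t).attach, (∏ i ∈ T.1, w i) *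
        (vandermonde (a ∘ T.1.orderEmbOfFin (Finset.mem_powersetCard.mp T.2).2)).det ^ 2 := by
  have hfactor : (Matrix.of fun i j : Fin t => ∑ r, w r * a r ^ (i.1 + j.1)) =
      (Matrix.of fun (i : Fin t) r => a r ^ i.1) *
        (Matrix.of fun r (j : Fin t) => w r * a r ^ j.1) := by
    ext i j
    simp only [of_apply, mul_apply, pow_add, mul_left_comm]
  rw [hfactor, det_mul_eq_sum_det_submatrix_mul_det_submatrix]
  refine Finset.sum_congr rfl fun T _ => ?_
  set e := T.1.orderEmbOfFin (Finset.mem_powersetCard.mp T.2).2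
  have hprod : ∏ k, w (e k) = ∏ i ∈ T.1, w i := by
    conv_rhs => rw [← T.1.map_orderEmbOfFin_univ (Finset.mem_powersetCard.mp T.2).2]
    exact (Finset.prod_map _ _ _).symm
  have hleft : (Matrix.of fun (i : Fin t) r => a r ^ i.1).submatrix id e =
      (vandermonde (a ∘ e))ᵀ := rfl
  have hright : ((Matrix.of fun r (j : Fin t) => w r * a r ^ j.1).submatrix e id).det =
      (∏ i ∈ T.1, w i) * (vandermonde (a ∘ e)).det := by
    rw [← hprod]
    exact det_mul_column (w ∘ e) (vandermonde (a ∘ e))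
  rw [hleft, hright, det_transpose, mul_left_comm, sq]

end CauchyBinet

theorem det_M_eq_sum_general {R ι κ : Type*} [CommRing R] [Fintype ι] [DecidableEq ι] [Fintype κ]
    [LinearOrder κ] (G : Matrix ι ι R) (lam : κ → R) (p : κ → ℕ)
    (hchar : G.charpoly = ∏ i, (X - C (lam i)) ^ p i) (t l : ℕ) :
    (Matrix.of fun i j : Fin t => (G ^ (i.1 + j.1 + l)).trace).det =
      ∑ T ∈ (Finset.univ.powersetCard t).attach,
        (∏ i ∈ T.1, (p i : R)) * (∏ i ∈ T.1, lam i) ^ l *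
          (Matrix.vandermonde fun k : Fin t =>
            lam ((T.1.orderIsoOfFin (Finset.mem_powersetCard.mp T.2).2 k) : κ)).det ^ 2 := by
  have htrace (k : ℕ) : (G ^ k).trace = ∑ i, p i * lam i ^ k := by
    simpa using trace_aeval_of_charpoly_eq_prod hchar (X ^ k)
  have hmoment (k : ℕ) : (G ^ (k + l)).trace = ∑ i, p i * lam i ^ l * lam i ^ k := by
    rw [htrace]
    exact Finset.sum_congr rfl fun i _ => by ring
  simp only [hmoment, det_of_sum_mul_pow_add, Finset.prod_mul_distrib, Finset.prod_pow]
  rfl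

/-- If the characteristic polynomial of `G` factors as
`∏ (X - λᵢ)^{pᵢ}` with the `λᵢ` pairwise distinct and `pᵢ ≥ 1`, then for `1 ≤ t ≤ m`
and `l ≥ 0` the determinant of `M_{t,l}(G)` (whose `(i,j)` entry, `0`-based, is
`tr G^{i+j+l}`) equals the sum, over all `t`-element subsets `T = {i₁ < ⋯ < i_t}` of
`{1, …, m}`, of `p_{i₁}⋯p_{i_t} · (λ_{i₁}⋯λ_{i_t})^l · (det V(λ_{i₁}, …, λ_{i_t}))²`,
where `V` is the Vandermonde matrix.  The increasing enumeration `i₁ < ⋯ < i_t` of `T`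
is `T.orderIsoOfFin`. -/
theorem det_M_eq_sum {K : Type*} [Field K] [IsAlgClosed K] {n m : ℕ}
    (G : Matrix (Fin n) (Fin n) K) (lam : Fin m → K) (p : Fin m → ℕ)
    (hinj : Function.Injective lam) (hp : ∀ i, 1 ≤ p i)
    (hchar : G.charpoly = ∏ i, (X - C (lam i)) ^ p i)
    (t l : ℕ) (ht1 : 1 ≤ t) (htm : t ≤ m) :
    (Matrix.of fun i j : Fin t => (G ^ (i.1 + j.1 + l)).trace).det =
      ∑ T ∈ (Finset.univ.powersetCard t).attach,
        (∏ i ∈ T.1, (p i : K)) * (∏ i ∈ T.1, lam i) ^ l *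
          (Matrix.vandermonde fun k : Fin t =>
            lam ((T.1.orderIsoOfFin (Finset.mem_powersetCard.mp T.2).2 k) : Fin m)).det ^ 2 :=
  det_M_eq_sum_general G lam p hchar t l
end

section
/- Let K be an algebraically closed field, let G be an n×n matrix over K, and suppose the characteristic polynomial of G factors as ∏_{i=1}^{m} (X − λ_i)^{p_i} where λ_1, …, λ_m ∈ K are pairwise distinct and p_1, …, p_m ≥ 1. Then for every integer l ≥ 0, det M_{m,l}(G) = p_1⋯p_m · (λ_1⋯λ_m)^l · ∏_{1 ≤ i < j ≤ m} (λ_j − λ_i)². -/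
open Polynomial Matrix

/-!
The characteristic polynomial determines all traces `tr Gᵏ`: Jacobi's formula, applied to the
invertible matrix `1 - X G` of power series, shows that the logarithmic derivative of
`det (1 - X G)` is `-∑ₖ tr Gᵏ⁺¹ Xᵏ`. Comparing `G` with the diagonal matrix in which each `λᵢ` is
repeated `pᵢ` times gives `tr Gᵏ = ∑ᵢ pᵢ λᵢᵏ` over any commutative ring. Hence `M_{m,l}(G)` is the
Gram-type product `Vᵀ D V`, with `V` the Vandermonde matrix of the `λᵢ` and `D` the diagonal matrix
of the `pᵢ λᵢˡ`.
-/

section Jacobi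

theorem derivation_prod {R S M ι : Type*} [CommSemiring R] [CommSemiring S] [Algebra R S]
    [AddCommMonoid M] [Module R M] [Module S M] [DecidableEq ι]
    (D : Derivation R S M) (s : Finset ι) (f : ι → S) :
    D (∏ i ∈ s, f i) = ∑ i ∈ s, (∏ j ∈ s.erase i, f j) • D (f i) := by
  induction s using Finset.induction_on with
  | empty => simp
  | insert a s ha ih =>
    have herase : ∀ i ∈ s, ∏ j ∈ (insert a s).erase i, f j = f a * ∏ j ∈ s.erase i, f j := by
      intro i hi
      have hai : a ≠ i := fun h => ha (h ▸ hi)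
      rw [Finset.erase_insert_of_ne hai, Finset.prod_insert (by simp [ha])]
    rw [Finset.prod_insert ha, D.leibniz, ih, Finset.sum_insert ha, Finset.erase_insert ha,
      Finset.smul_sum, add_comm]
    congr 1
    exact Finset.sum_congr rfl fun i hi => by rw [herase i hi, mul_smul]

variable {R S n : Type*} [CommSemiring R] [CommRing S] [Algebra R S] [Fintype n] [DecidableEq n]

theorem derivation_det_eq_sum_det_updateCol (D : Derivation R S S) (A : Matrix n n S) :
    D A.det = ∑ j, (A.updateCol j fun i => D (A i j)).det := by
  have hprod (σ : Equiv.Perm n) (j : n) :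
      ∏ i, A.updateCol j (fun i => D (A i j)) (σ i) i =
        (∏ i ∈ Finset.univ.erase j, A (σ i) i) * D (A (σ j) j) := by
    rw [← Finset.prod_erase_mul _ _ (Finset.mem_univ j), updateCol_self]
    congr 1
    exact Finset.prod_congr rfl fun i hi => updateCol_ne (Finset.ne_of_mem_erase hi)
  simp_rw [det_apply, map_sum, hprod]
  rw [Finset.sum_comm]
  refine Finset.sum_congr rfl fun σ _ => ?_
  rw [← Finset.smul_sum, Units.smul_def, map_zsmul, derivation_prod, Units.smul_def]
  simp_rw [smul_eq_mul]

theorem derivation_det (D : Derivation R S S) (A : Matrix n n S) :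
    D A.det = (A.adjugate * A.map D).trace := by
  rw [derivation_det_eq_sum_det_updateCol]
  refine Finset.sum_congr rfl fun j _ => ?_
  rw [← cramer_apply, cramer_eq_adjugate_mulVec]
  rfl

end Jacobi

section TracePow

variable {R n n' : Type*} [CommRing R] [Fintype n] [DecidableEq n] [Fintype n'] [DecidableEq n']

/-- The formal resolvent `∑ₖ Aᵏ Xᵏ` of `A`, the inverse of `1 - X A`, encoded as a matrix of power
series rather than as a power series with matrix coefficients so that determinants apply. -/
def resolventSeries (A : Matrix n n R) : Matrix n n (PowerSeries R) :=
  of fun i j => PowerSeries.mk fun k => (A ^ k) i j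

theorem one_sub_X_smul_mul_resolventSeries (A : Matrix n n R) :
    (1 - (PowerSeries.X : PowerSeries R) • A.map PowerSeries.C) * resolventSeries A = 1 := by
  ext i j k
  rw [sub_mul, one_mul, smul_mul, Matrix.sub_apply, Matrix.smul_apply, smul_eq_mul, map_sub,
    mul_apply]
  cases k with
  | zero => by_cases h : i = j <;> simp [resolventSeries, one_apply, h]
  | succ k =>
    have hone : PowerSeries.coeff (k + 1) ((1 : Matrix n n (PowerSeries R)) i j) = 0 := by
      by_cases h : i = j <;> simp [one_apply, h, PowerSeries.coeff_one]
    simp [hone, resolventSeries, PowerSeries.coeff_succ_X_mul, pow_succ', mul_apply]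

theorem trace_resolventSeries_mul (A : Matrix n n R) :
    (resolventSeries A * A.map PowerSeries.C).trace =
      PowerSeries.mk fun k => (A ^ (k + 1)).trace := by
  ext k
  simp [resolventSeries, trace, mul_apply, pow_succ]

theorem coe_charpolyRev (A : Matrix n n R) :
    (A.charpolyRev : PowerSeries R) =
      (1 - (PowerSeries.X : PowerSeries R) • A.map PowerSeries.C).det := by
  rw [charpolyRev, ← coeToPowerSeries.ringHom_apply, RingHom.map_det]
  congr 1
  ext i j : 1
  by_cases h : i = j <;> simp [h, one_apply, PowerSeries.X_mul]

theorem derivative_charpolyRev (A : Matrix n n R) :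
    (derivative A.charpolyRev : PowerSeries R) =
      -((A.charpolyRev : PowerSeries R) * PowerSeries.mk fun k => (A ^ (k + 1)).trace) := by
  set N := 1 - (PowerSeries.X : PowerSeries R) • A.map PowerSeries.C with hN
  have hadj : N.adjugate = N.det • resolventSeries A := by
    rw [← mul_one N.adjugate, ← one_sub_X_smul_mul_resolventSeries A, ← mul_assoc,
      adjugate_mul, smul_mul, one_mul]
  have hderiv : N.map (PowerSeries.derivative R) = -A.map PowerSeries.C := by
    ext i j : 1
    by_cases h : i = j <;> simp [hN, h, one_apply]
  rw [← PowerSeries.derivative_coe, coe_charpolyRev, derivation_det, hadj, hderiv, mul_neg,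
    trace_neg, smul_mul, trace_smul, trace_resolventSeries_mul, smul_eq_mul]

theorem trace_pow_eq_of_charpoly_eq {A : Matrix n n R} {B : Matrix n' n' R}
    (h : A.charpoly = B.charpoly) (k : ℕ) : (A ^ k).trace = (B ^ k).trace := by
  nontriviality R
  cases k with
  | zero =>
    have hcard : Fintype.card n = Fintype.card n' := by
      rw [← charpoly_natDegree_eq_dim A, h, charpoly_natDegree_eq_dim]
    simp [hcard]
  | succ k =>
    have hrev : A.charpolyRev = B.charpolyRev := by
      rw [← reverse_charpoly, h, reverse_charpoly]
    have hunit : IsUnit (B.charpolyRev : PowerSeries R) := by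
      simp [PowerSeries.isUnit_iff_constantCoeff, coeff_zero_eq_eval_zero]
    have hseries : (PowerSeries.mk fun k => (A ^ (k + 1)).trace) =
        PowerSeries.mk fun k => (B ^ (k + 1)).trace := by
      refine hunit.mul_left_cancel (neg_injective ?_)
      rw [← derivative_charpolyRev B, ← hrev, derivative_charpolyRev A]
    simpa using congrArg (PowerSeries.coeff k) hseries

theorem trace_pow_eq_sum_of_charpoly_eq_prod {κ : Type*} [Fintype κ] {A : Matrix n n R}
    {lam : κ → R} {p : κ → ℕ} (h : A.charpoly = ∏ i, (X - C (lam i)) ^ p i) (k : ℕ) :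
    (A ^ k).trace = ∑ i, (p i : R) * lam i ^ k := by
  classical
  let D : Matrix (Σ i, Fin (p i)) (Σ i, Fin (p i)) R := diagonal fun x => lam x.1
  have hD : A.charpoly = D.charpoly := by
    rw [h, charpoly_diagonal, Fintype.prod_sigma]
    simp
  rw [trace_pow_eq_of_charpoly_eq hD, diagonal_pow, trace_diagonal, Fintype.sum_sigma]
  simp

end TracePow

section TraceHankel

variable {R n : Type*} [CommRing R] [Fintype n] [DecidableEq n]

/-- The matrix `M_{t,l}(A)` of traces of powers, with rows and columns indexed from `0`, so that
the exponent is `i + j + l` rather than `i + j + l - 2`. -/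
def traceHankel (A : Matrix n n R) (t l : ℕ) : Matrix (Fin t) (Fin t) R :=
  of fun i j => (A ^ (i.1 + j.1 + l)).trace

theorem traceHankel_eq_transpose_mul_diagonal_mul {κ : Type*} [Fintype κ] [DecidableEq κ]
    {A : Matrix n n R} {lam : κ → R} {p : κ → ℕ}
    (h : A.charpoly = ∏ i, (X - C (lam i)) ^ p i) (t l : ℕ) :
    traceHankel A t l =
      (rectVandermonde lam 1 t)ᵀ * diagonal (fun a => (p a : R) * lam a ^ l) *
        rectVandermonde lam 1 t := by
  ext i j
  rw [traceHankel, of_apply, trace_pow_eq_sum_of_charpoly_eq_prod h, mul_apply]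
  refine Finset.sum_congr rfl fun a _ => ?_
  simp only [mul_diagonal, transpose_apply, rectVandermonde_apply, Pi.one_apply, one_pow, mul_one]
  ring

theorem det_M_top_general {m : ℕ} (G : Matrix n n R) (lam : Fin m → R) (p : Fin m → ℕ)
    (hchar : G.charpoly = ∏ i, (X - C (lam i)) ^ p i) (l : ℕ) :
    (traceHankel G m l).det =
      (∏ i, (p i : R)) * (∏ i, lam i) ^ l *
        ∏ i, ∏ j ∈ Finset.Ioi i, (lam j - lam i) ^ 2 := by
  have hV : rectVandermonde lam 1 m = vandermonde lam := (vandermonde_eq_projVandermonde lam).symm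
  rw [traceHankel_eq_transpose_mul_diagonal_mul hchar, hV, det_mul, det_mul, det_transpose,
    det_diagonal, det_vandermonde, Finset.prod_mul_distrib, Finset.prod_pow]
  simp_rw [Finset.prod_pow]
  ring

end TraceHankel

/-- If the characteristic polynomial of `G` factors as
`∏ (X - λᵢ)^{pᵢ}` with the `λᵢ` pairwise distinct and `pᵢ ≥ 1`, then for every `l ≥ 0`,
`det M_{m,l}(G) = p₁⋯p_m · (λ₁⋯λ_m)^l · ∏_{i<j} (λⱼ - λᵢ)²`.  Here the `(i,j)` entry of
`M_{m,l}(G)` (`0`-based) is `tr G^{i+j+l}`. -/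
theorem det_M_top {K : Type*} [Field K] [IsAlgClosed K] {n m : ℕ}
    (G : Matrix (Fin n) (Fin n) K) (lam : Fin m → K) (p : Fin m → ℕ)
    (hinj : Function.Injective lam) (hp : ∀ i, 1 ≤ p i)
    (hchar : G.charpoly = ∏ i, (X - C (lam i)) ^ p i)
    (l : ℕ) :
    (Matrix.of fun i j : Fin m => (G ^ (i.1 + j.1 + l)).trace).det =
      (∏ i, (p i : K)) * (∏ i, lam i) ^ l *
        ∏ i, ∏ j ∈ Finset.Ioi i, (lam j - lam i) ^ 2 :=
  det_M_top_general G lam p hchar l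
end

section
/- Let G be a real symmetric n×n matrix with exactly m distinct (real) eigenvalues. Then det M_t(G) > 0 for every integer t with 1 ≤ t ≤ m, and det M_t(G) = 0 for every integer t > m. -/
open Polynomial Matrix

/-! If `v` lists the eigenvalues of a Hermitian matrix `A` with multiplicity, then
`tr A ^ k = ∑ i, v i ^ k`, so the Hankel matrix of traces factors as `Vᴴ * V`, where `V` is the
rectangular Vandermonde matrix with `t` columns and nodes `v`. A vector in the kernel of `V` is
the coefficient vector of a polynomial of degree `< t` vanishing at every eigenvalue. If `t` is at
most the number of distinct eigenvalues, only the zero polynomial does so, and `Vᴴ * V` is positive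
definite; otherwise the product of the `X - μ` over the distinct eigenvalues `μ` is one, and
`Vᴴ * V` is singular. -/

/-- The `t × t` Hankel matrix of a sequence, with rows and columns numbered from `0`. The matrix
`M_t(G)` is the Hankel matrix of the sequence `tr G ^ k`. -/
def hankelMatrix {R : Type*} (a : ℕ → R) (t : ℕ) : Matrix (Fin t) (Fin t) R :=
  of fun i j => a (i.1 + j.1)

section Vandermonde

variable {ι R : Type*} [CommRing R] {t : ℕ}

theorem rectVandermonde_one_mulVec [DecidableEq R] (v : ι → R) (c : Fin t → R) :
    rectVandermonde v 1 t *ᵥ c = fun i => (ofFn t c).eval (v i) := by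
  ext i
  simp [mulVec, dotProduct, rectVandermonde_apply, ofFn_eq_sum_monomial, eval_finsetSum, mul_comm]

theorem conjTranspose_rectVandermonde_one [StarRing R] {v : ι → R} (hv : IsSelfAdjoint v) (t : ℕ) :
    (rectVandermonde v 1 t)ᴴ = (rectVandermonde v 1 t)ᵀ := by
  ext i j
  simp [rectVandermonde_apply, (hv.apply j).star_eq]

variable [Fintype ι]

theorem transpose_rectVandermonde_one_mul_self (v : ι → R) (t : ℕ) :
    (rectVandermonde v 1 t)ᵀ * rectVandermonde v 1 t = hankelMatrix (fun k => ∑ i, v i ^ k) t := by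
  ext i j
  simp [hankelMatrix, mul_apply, rectVandermonde_apply, pow_add]

variable [DecidableEq R]

theorem rectVandermonde_one_mulVec_injective [IsDomain R] {v : ι → R}
    (ht : t ≤ (Finset.univ.image v).card) :
    Function.Injective (rectVandermonde v 1 t).mulVec := by
  refine (injective_iff_map_eq_zero (rectVandermonde v 1 t).mulVecLin).2 fun c hc => ?_
  have heval : ∀ i, (ofFn t c).eval (v i) = 0 :=
    congrFun ((rectVandermonde_one_mulVec v c).symm.trans hc)
  have hdeg : (ofFn t c).degree < (Finset.univ.image v).card :=
    (ofFn_degree_lt c).trans_le (by exact_mod_cast ht)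
  have hzero : ofFn t c = 0 :=
    eq_zero_of_degree_lt_of_eval_finset_eq_zero _ hdeg (by simpa using heval)
  exact injective_ofFn t (hzero.trans (map_zero _).symm)

theorem exists_ne_zero_rectVandermonde_one_mulVec_eq_zero [Nontrivial R] {v : ι → R}
    (ht : (Finset.univ.image v).card < t) :
    ∃ c ≠ 0, rectVandermonde v 1 t *ᵥ c = 0 := by
  let p : R[X] := ∏ x ∈ Finset.univ.image v, (X - C x)
  have hp : p ≠ 0 := (monic_prod_X_sub_C id _).ne_zero
  have hdeg : p.natDegree < t := (natDegree_finsetProd_X_sub_C_eq_card _ _).trans_lt ht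
  have heval (i : ι) : p.eval (v i) = 0 := by
    rw [eval_prod]
    exact Finset.prod_eq_zero (Finset.mem_image_of_mem v (Finset.mem_univ i)) (by simp)
  have hofFn : ofFn t (toFn t p) = p := ofFn_comp_toFn_eq_id_of_natDegree_lt hdeg
  refine ⟨toFn t p, fun h => hp (by rw [← hofFn, h, map_zero]), ?_⟩
  rw [rectVandermonde_one_mulVec, hofFn]
  exact funext heval

theorem posDef_hankelMatrix_sum_pow [IsDomain R] [PartialOrder R] [StarRing R] [StarOrderedRing R]
    {v : ι → R} (hv : IsSelfAdjoint v) (ht : t ≤ (Finset.univ.image v).card) :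
    (hankelMatrix (fun k => ∑ i, v i ^ k) t).PosDef := by
  rw [← transpose_rectVandermonde_one_mul_self, ← conjTranspose_rectVandermonde_one hv]
  exact PosDef.conjTranspose_mul_self _ (rectVandermonde_one_mulVec_injective ht)

theorem det_hankelMatrix_sum_pow_eq_zero [IsDomain R] {v : ι → R}
    (ht : (Finset.univ.image v).card < t) :
    (hankelMatrix (fun k => ∑ i, v i ^ k) t).det = 0 := by
  obtain ⟨c, hc, hVc⟩ := exists_ne_zero_rectVandermonde_one_mulVec_eq_zero ht
  refine exists_mulVec_eq_zero_iff.1 ⟨c, hc, ?_⟩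
  rw [← transpose_rectVandermonde_one_mul_self, ← mulVec_mulVec, hVc, mulVec_zero]

end Vandermonde

section Hermitian

variable {ι 𝕜 : Type*} [Fintype ι] [DecidableEq ι] [RCLike 𝕜] {A : Matrix ι ι 𝕜}

theorem trace_pow_eq_sum_eigenvalues_pow (hA : A.IsHermitian) (k : ℕ) :
    (A ^ k).trace = ∑ i, (hA.eigenvalues i : 𝕜) ^ k := by
  conv_lhs => rw [hA.spectral_theorem, ← map_pow, Unitary.conjStarAlgAut_apply, trace_mul_comm,
    ← mul_assoc]
  simp [diagonal_pow, trace_diagonal]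

open scoped ComplexOrder in
theorem det_M_pos_and_zero_of_symm_general [DecidableEq 𝕜] (hA : A.IsHermitian) :
    (∀ t ≤ A.charpoly.roots.toFinset.card, 0 < (hankelMatrix (fun k => (A ^ k).trace) t).det) ∧
    (∀ t > A.charpoly.roots.toFinset.card, (hankelMatrix (fun k => (A ^ k).trace) t).det = 0) := by
  let v : ι → 𝕜 := fun i => hA.eigenvalues i
  have hv : IsSelfAdjoint v := funext fun i => RCLike.conj_ofReal _
  have hcard : A.charpoly.roots.toFinset.card = (Finset.univ.image v).card := by
    rw [hA.roots_charpoly_eq_eigenvalues]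
    rfl
  simp only [trace_pow_eq_sum_eigenvalues_pow hA, hcard]
  exact ⟨fun t ht => (posDef_hankelMatrix_sum_pow hv ht).det_pos,
    fun t ht => det_hankelMatrix_sum_pow_eq_zero ht⟩

end Hermitian

/-- Let `G` be a real symmetric `n × n` matrix with exactly `m`
distinct (real) eigenvalues, i.e. the characteristic polynomial of `G` has exactly `m`
distinct roots.  Then `det M_t(G) > 0` for `1 ≤ t ≤ m` and `det M_t(G) = 0` for `t > m`,
where the `(i,j)` entry of `M_t(G)` (`0`-based) is `tr G^{i+j}`. -/
theorem det_M_pos_and_zero_of_symm {n m : ℕ} (G : Matrix (Fin n) (Fin n) ℝ)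
    (hG : G.IsSymm) (hm : G.charpoly.roots.toFinset.card = m) :
    (∀ t : ℕ, 1 ≤ t → t ≤ m →
      0 < (Matrix.of fun i j : Fin t => (G ^ (i.1 + j.1)).trace).det) ∧
    (∀ t : ℕ, m < t →
      (Matrix.of fun i j : Fin t => (G ^ (i.1 + j.1)).trace).det = 0) := by
  obtain ⟨hpos, hzero⟩ := det_M_pos_and_zero_of_symm_general (isHermitian_iff_isSymm.2 hG)
  exact hm ▸ ⟨fun t _ => hpos t, hzero⟩
end

section
/- Let K be an algebraically closed field, let G be an n×n matrix over K, and let λ ∈ K. Then for every integer t ≥ 1, det M_t(λI − G) = det M_t(G), where I is the n×n identity matrix. -/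
open Polynomial Matrix

/-!
Since `λI - G` is a polynomial of degree at most `1` in `G`, its power `(λI - G) ^ i` is a
combination of `I, G, …, G ^ i` in which `G ^ i` has coefficient `(-1) ^ i`. Hence `M_t(λI - G)` is
congruent to `M_t(G)`, regarded as the Gram matrix of the powers of `G` under the trace form, by a
triangular matrix of determinant `±1`.
-/

section MomentMatrix

variable {R A : Type*} {t : ℕ}

/-- The Hankel matrix of the moments `τ (x ^ k)` of an element `x` of an algebra under a linear
functional `τ`, with rows and columns indexed from `0`. The matrix `M_t(G)` is the case where `τ`
is the trace. -/
def momentMatrix [CommSemiring R] [Semiring A] [Algebra R A] (τ : A →ₗ[R] R) (x : A) (t : ℕ) :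
    Matrix (Fin t) (Fin t) R :=
  of fun i j => τ (x ^ (i.1 + j.1))

theorem of_apply_aeval_mul_aeval_eq_mul_momentMatrix_mul [CommSemiring R] [Semiring A]
    [Algebra R A] (τ : A →ₗ[R] R) (x : A) (p : Fin t → R[X]) (hp : ∀ i, (p i).natDegree < t) :
    (of fun i j => τ (aeval x (p i) * aeval x (p j))) =
      (of fun k j : Fin t => (p j).coeff k)ᵀ * momentMatrix τ x t *
        of fun k j : Fin t => (p j).coeff k := by
  have aeval_eq_sum (i : Fin t) : aeval x (p i) = ∑ k : Fin t, (p i).coeff k • x ^ k.1 := by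
    rw [aeval_eq_sum_range' (hp i), Finset.sum_range]
  ext i j
  simp only [of_apply, mul_apply, transpose_apply, momentMatrix, aeval_eq_sum, Finset.sum_mul,
    Finset.mul_sum, map_sum, smul_mul_assoc, mul_smul_comm, map_smul, smul_eq_mul, ← pow_add]
  exact Finset.sum_congr rfl fun k _ => Finset.sum_congr rfl fun l _ => by ring

variable [CommRing R]

theorem det_of_coeff_of_natDegree_le (p : Fin t → R[X]) (hp : ∀ i, (p i).natDegree ≤ i) :
    (of fun k j : Fin t => (p j).coeff k).det = ∏ i, (p i).coeff i :=
  det_of_isUpperTriangular (matrixOfPolynomials_blockTriangular p hp)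

variable [Semiring A] [Algebra R A]

theorem det_of_apply_aeval_mul_aeval (τ : A →ₗ[R] R) (x : A) (p : Fin t → R[X])
    (hp : ∀ i, (p i).natDegree ≤ i) :
    (of fun i j => τ (aeval x (p i) * aeval x (p j))).det =
      (∏ i, (p i).coeff i) ^ 2 * (momentMatrix τ x t).det := by
  rw [of_apply_aeval_mul_aeval_eq_mul_momentMatrix_mul τ x p fun i => (hp i).trans_lt i.2,
    det_mul, det_mul, det_transpose, det_of_coeff_of_natDegree_le p hp]
  ring

theorem det_momentMatrix_smul_add_smul_one (τ : A →ₗ[R] R) (x : A) (a b : R) (t : ℕ) :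
    (momentMatrix τ (a • x + b • 1) t).det = a ^ (t * (t - 1)) * (momentMatrix τ x t).det := by
  let p (i : Fin t) : R[X] := (C a * X + C b) ^ i.1
  have natDegree_p (i : Fin t) : (p i).natDegree ≤ i := by
    simpa only [mul_one] using natDegree_pow_le_of_le i.1 (natDegree_linear_le (a := a) (b := b))
  have coeff_p (i : Fin t) : (p i).coeff i = a ^ i.1 := by
    simpa using coeff_pow_of_natDegree_le (m := i.1) (natDegree_linear_le (a := a) (b := b))
  have prod_coeff_p : (∏ i, (p i).coeff i) ^ 2 = a ^ (t * (t - 1)) := by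
    simp only [coeff_p]
    rw [Fin.prod_univ_eq_prod_range (a ^ ·) t, Finset.prod_pow_eq_pow_sum, ← pow_mul,
      Finset.sum_range_id_mul_two]
  have aeval_p (i : Fin t) : aeval x (p i) = (a • x + b • 1) ^ i.1 := by
    simp [p, Algebra.smul_def]
  rw [← prod_coeff_p, ← det_of_apply_aeval_mul_aeval τ x p natDegree_p]
  simp only [momentMatrix, aeval_p, pow_add]

end MomentMatrix

theorem det_M_shift_invariant_general {R m : Type*} [CommRing R] [Fintype m] [DecidableEq m]
    (G : Matrix m m R) (lam : R) (t : ℕ) :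
    (of fun i j : Fin t => ((lam • (1 : Matrix m m R) - G) ^ (i.1 + j.1)).trace).det =
      (of fun i j : Fin t => (G ^ (i.1 + j.1)).trace).det := by
  have shift : lam • (1 : Matrix m m R) - G = (-1 : R) • G + lam • 1 := by
    rw [neg_one_smul, neg_add_eq_sub]
  have h := det_momentMatrix_smul_add_smul_one (traceLinearMap m R R) G (-1) lam t
  rwa [← shift, (Nat.even_mul_pred_self t).neg_one_pow, one_mul] at h

/-- For an `n × n` matrix `G` over an algebraically closed field `K`
and any `λ ∈ K`, `det M_t(λI - G) = det M_t(G)` for every `t ≥ 1`, where the `(i,j)`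
entry of `M_t(A)` (`0`-based) is `tr A^{i+j}`. -/
theorem det_M_shift_invariant {K : Type*} [Field K] [IsAlgClosed K] {n : ℕ}
    (G : Matrix (Fin n) (Fin n) K) (lam : K) (t : ℕ) (ht : 1 ≤ t) :
    (Matrix.of fun i j : Fin t =>
        ((lam • (1 : Matrix (Fin n) (Fin n) K) - G) ^ (i.1 + j.1)).trace).det =
      (Matrix.of fun i j : Fin t => (G ^ (i.1 + j.1)).trace).det :=
  det_M_shift_invariant_general G lam t
end
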